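/- (Correctness of the reduction proving NP-completeness of the Cover Decoding Problem) Let G ∈ F_q^{k×n} with rows g_1, …, g_k, let r ∈ F_q^n, and let t ≤ n be a positive integer. For each i define G_i ∈ F_q^{(t+1)×n} by stacking the row g_i exactly t+1 times, and define R ∈ F_q^{(t+1)×n} by stacking r exactly t+1 times. Then there exists e ∈ F_q^n with wt_H(e) ≤ t and r − e in the row span of G if and only if there exists E ∈ F_q^{(t+1)×n} with wt_C(E) ≤ t and R − E in the F_q-span of G_1, …, G_k. -/

import Mathlib

/-- A cover of a matrix `A` is a set of lines (rows, encoded as `Sum.inl`, and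
columns, encoded as `Sum.inr`) such that every nonzero entry of `A` lies in one
of these lines. -/
def IsCover {F : Type*} [Field F] {m n : ℕ} (A : Matrix (Fin m) (Fin n) F)
    (S : Finset (Fin m ⊕ Fin n)) : Prop :=
  ∀ i j, A i j ≠ 0 → Sum.inl i ∈ S ∨ Sum.inr j ∈ S

/-- The cover weight of a matrix: the minimum cardinality of a cover. -/
noncomputable def coverWt {F : Type*} [Field F] {m n : ℕ}
    (A : Matrix (Fin m) (Fin n) F) : ℕ :=
  sInf {c | ∃ S : Finset (Fin m ⊕ Fin n), IsCover A S ∧ S.card = c}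

/-- A matrix has cover weight at most `t` iff it has a cover with at most `t` lines. -/
theorem coverWt_le_iff {F : Type*} [Field F] {m n : ℕ} (A : Matrix (Fin m) (Fin n) F) (t : ℕ) :
    coverWt A ≤ t ↔ ∃ S : Finset (Fin m ⊕ Fin n), IsCover A S ∧ S.card ≤ t := by
  constructor
  · intro h
    have hne : {c | ∃ S : Finset (Fin m ⊕ Fin n), IsCover A S ∧ S.card = c}.Nonempty :=
      ⟨_, Finset.univ, fun i _ _ => Or.inl (Finset.mem_univ (Sum.inl i)), rfl⟩
    obtain ⟨S, hS, hcard⟩ := Nat.sInf_mem hne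
    exact ⟨S, hS, hcard.trans_le h⟩
  · rintro ⟨S, hS, hcard⟩
    exact le_trans (Nat.sInf_le ⟨S, hS, rfl⟩) hcard

/-- Stacking a vector more than `t` times turns Hamming weight at most `t` into cover weight at
most `t`: a cover with at most `t` lines misses some row, whose support it must then cover by
columns. -/
theorem coverWt_stack_le_iff {F : Type*} [Field F] [DecidableEq F] {m n t : ℕ} (htm : t < m)
    (e : Fin n → F) :
    coverWt (Matrix.of fun _ : Fin m => e) ≤ t ↔ hammingNorm e ≤ t := by
  rw [coverWt_le_iff]
  constructor
  · rintro ⟨S, hS, hcard⟩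
    obtain ⟨i, hi⟩ : ∃ i : Fin m, Sum.inl i ∉ S := by
      by_contra! h
      have hle := Finset.card_le_card_of_injOn (s := Finset.univ) (t := S) Sum.inl
        (fun i _ => h i) Sum.inl_injective.injOn
      rw [Finset.card_univ, Fintype.card_fin] at hle
      omega
    refine le_trans (Finset.card_le_card_of_injOn Sum.inr (fun j hj => ?_)
      Sum.inr_injective.injOn) hcard
    exact (hS i j (by simpa using hj)).resolve_left hi
  · intro h
    refine ⟨(Finset.univ.filter fun j => e j ≠ 0).map Function.Embedding.inr, fun i j hij => ?_, ?_⟩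
    · right
      simpa using hij
    · rwa [Finset.card_map]

open Matrix in
/-- A linear combination of stacked rows is the stack of the linear combination of the rows. -/
theorem sum_smul_stack {F : Type*} [Field F] {k m n : ℕ} (G : Matrix (Fin k) (Fin n) F)
    (u : Fin k → F) :
    ∑ i, u i • (Matrix.of fun _ : Fin m => G i) = Matrix.of fun _ : Fin m => u ᵥ* G := by
  ext a j
  simp [Matrix.sum_apply, Matrix.vecMul, dotProduct]

open Matrix in
/-- Correctness of the reduction from the Hamming Decoding Problem to the Cover
Decoding Problem: with `G_i` (resp. `R`) obtained by stacking the `i`-th row `g_i`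
of `G` (resp. `r`) exactly `t+1` times, there exists `e` with `wt_H(e) ≤ t` and
`r − e` in the row span of `G` iff there exists `E` with `wt_C(E) ≤ t` and
`R − E` in the span of `G_1, …, G_k`. -/
theorem cover_decoding_reduction {F : Type*} [Field F] [Fintype F]
    [DecidableEq F] {q k n t : ℕ} (hq : Fintype.card F = q)
    (G : Matrix (Fin k) (Fin n) F) (r : Fin n → F) (ht : 0 < t) (htn : t ≤ n) :
    (∃ e : Fin n → F, hammingNorm e ≤ t ∧ ∃ x : Fin k → F, r - e = x ᵥ* G) ↔
    (∃ E : Matrix (Fin (t + 1)) (Fin n) F, coverWt E ≤ t ∧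
      ∃ u : Fin k → F,
        (Matrix.of fun _ : Fin (t + 1) => r) - E =
          ∑ i, u i • (Matrix.of fun _ : Fin (t + 1) => G i)) := by
  constructor
  · rintro ⟨e, he, x, hx⟩
    refine ⟨Matrix.of fun _ => e, (coverWt_stack_le_iff (Nat.lt_succ_self t) e).2 he, x, ?_⟩
    rw [sum_smul_stack, ← hx]
    rfl
  · rintro ⟨E, hE, u, hu⟩
    rw [sum_smul_stack, sub_eq_iff_eq_add', ← sub_eq_iff_eq_add] at hu
    refine ⟨r - u ᵥ* G, (coverWt_stack_le_iff (Nat.lt_succ_self t) _).1 ?_, u, sub_sub_cancel _ _⟩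
    rw [← hu] at hE
    exact hE
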